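/- arXiv:2508.02249 — 2 statements merged into one kernel-verified Lean document; each statement's English description precedes it below -/
import Mathlib

section
/- Let Δ ≥ 2, m = (Δ−1)² + 1, n = (Δ−1)² + Δ, and let T ∈ ℤ^{(m−Δ)×(Δ−1)} be the arc-node incidence matrix of the complete directed graph on Δ−1 nodes (one row ±(e_i − e_j) for each ordered pair of distinct nodes, with m − Δ = (Δ−1)(Δ−2) rows). Define A ∈ ℤ^{m×n} as the block matrix with rows: [I_{Δ−1} | I_{Δ−1} | 0 | 0], [T | 0 | I_{m−Δ} | 0], [−1_{Δ−1}^T | 0 | 0 | Δ], and define b = (2·1_{Δ−1}, 1_{m−Δ}, 1) ∈ ℤ^m. Then the only vector z ∈ ℤ^n with Az = b and z ≥ 0 is the all-ones vector 1 ∈ ℤ^n. -/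
/-- The arcs of the complete directed graph on `ν` nodes: ordered pairs of distinct nodes. -/
abbrev CompleteArc (ν : ℕ) := {p : Fin ν × Fin ν // p.1 ≠ p.2}

/-- Row index type for the matrix `A` of Proposition `prop_lower_bound_sparsity`:
`Δ−1` rows for the block `[I | I | 0 | 0]`, one row per arc for `[T | 0 | I | 0]`,
and one final row `[−1ᵀ | 0 | 0 | Δ]`.  Its cardinality is `m = (Δ−1)² + 1`. -/
abbrev SparsityRow (ν : ℕ) := Fin ν ⊕ CompleteArc ν ⊕ Unit

/-- Column index type; its cardinality is `n = (Δ−1)² + Δ`. -/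
abbrev SparsityCol (ν : ℕ) := Fin ν ⊕ Fin ν ⊕ CompleteArc ν ⊕ Unit

/-- The block matrix `A` with rows `[I_{Δ−1} | I_{Δ−1} | 0 | 0]`,
`[T | 0 | I_{m−Δ} | 0]` (`T` the arc-node incidence matrix of the complete directed
graph on `Δ−1` nodes), and `[−1ᵀ_{Δ−1} | 0 | 0 | Δ]`. -/
def sparsityMatrix (Δ : ℕ) : Matrix (SparsityRow (Δ - 1)) (SparsityCol (Δ - 1)) ℤ :=
  fun i j =>
    match i, j with
    | Sum.inl i, Sum.inl j => if i = j then 1 else 0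
    | Sum.inl i, Sum.inr (Sum.inl j) => if i = j then 1 else 0
    | Sum.inl _, _ => 0
    | Sum.inr (Sum.inl p), Sum.inl j =>
        (if p.1.1 = j then 1 else 0) - (if p.1.2 = j then 1 else 0)
    | Sum.inr (Sum.inl p), Sum.inr (Sum.inr (Sum.inl q)) => if p = q then 1 else 0
    | Sum.inr (Sum.inl _), _ => 0
    | Sum.inr (Sum.inr _), Sum.inl _ => -1
    | Sum.inr (Sum.inr _), Sum.inr (Sum.inr (Sum.inr _)) => (Δ : ℤ)
    | Sum.inr (Sum.inr _), _ => 0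

/-- The right-hand side `b = (2·1_{Δ−1}, 1_{m−Δ}, 1)`. -/
def sparsityRhs (Δ : ℕ) : SparsityRow (Δ - 1) → ℤ :=
  Sum.elim (fun _ => 2) (Sum.elim (fun _ => 1) (fun _ => 1))

/-! Write `z = (x, y, s, w)`. Eliminating the slacks `y` and `s` leaves `0 ≤ x ≤ 2`, entries of `x`
that pairwise differ by at most one, and `Δ w = 1 + ∑ x`. As `x` has `Δ - 1` entries, the right-hand
side lies in `[1, 2Δ - 1]`, which contains no multiple of `Δ` other than `Δ` itself; so `w = 1` and
`x` has mean one. An entry above the mean would force all entries to be at least the mean, so `x`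
is constant. -/

section Integers

variable {ι : Type*} [Fintype ι] {x : ι → ℤ}

theorem eq_of_pairwise_sub_le_one_of_sum_eq_card_mul {c : ℤ}
    (hdiff : Pairwise fun i j => x i - x j ≤ 1)
    (hsum : ∑ i, x i = Fintype.card ι * c) (i : ι) : x i = c := by
  have hconst : ∑ i, x i = ∑ _i : ι, c := by simp [hsum]
  have hle (i : ι) : x i ≤ c := by
    by_contra! hi
    have hge (j : ι) : c ≤ x j := by
      rcases eq_or_ne i j with rfl | hij
      · exact hi.le
      · linarith [hdiff hij]
    have hlt : ∑ _i : ι, c < ∑ i, x i :=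
      Finset.sum_lt_sum (fun j _ => hge j) ⟨i, Finset.mem_univ i, hi⟩
    exact hlt.ne' hconst
  exact (Finset.sum_eq_sum_iff_of_le fun i _ => hle i).mp hconst i (Finset.mem_univ i)

theorem eq_one_of_card_add_one_mul_sub_sum_eq_one {w : ℤ} (hnonneg : ∀ i, 0 ≤ x i)
    (hle : ∀ i, x i ≤ 2) (h : (Fintype.card ι + 1) * w - ∑ i, x i = 1) : w = 1 := by
  have hsum_nonneg : 0 ≤ ∑ i, x i := Finset.sum_nonneg fun i _ => hnonneg i
  have hsum_le : ∑ i, x i ≤ Fintype.card ι * 2 := by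
    simpa using Finset.sum_le_card_nsmul Finset.univ x 2 fun i _ => hle i
  have hcard : (0 : ℤ) ≤ Fintype.card ι + 1 := by positivity
  have hw_pos : 0 < w := pos_of_mul_pos_right (by linarith) hcard
  have hw_lt : w < 2 := lt_of_mul_lt_mul_left (by linarith) hcard
  lia

end Integers

theorem card_ne_pairs_add_card (α : Type*) [Fintype α] [DecidableEq α] :
    Fintype.card {p : α × α // p.1 ≠ p.2} + Fintype.card α = Fintype.card α ^ 2 := by
  rw [Fintype.card_of_subtype (Finset.univ : Finset α).offDiag (by simp), Finset.offDiag_card,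
    Finset.card_univ, Nat.sub_add_cancel (Nat.le_mul_self _), sq]

theorem card_sparsityRow (ν : ℕ) : Fintype.card (SparsityRow ν) = ν ^ 2 + 1 := by
  have harcs := card_ne_pairs_add_card (Fin ν)
  simp only [Fintype.card_sum, Fintype.card_fin, Fintype.card_unit] at harcs ⊢
  lia

theorem card_sparsityCol (ν : ℕ) : Fintype.card (SparsityCol ν) = ν ^ 2 + (ν + 1) := by
  have harcs := card_ne_pairs_add_card (Fin ν)
  simp only [Fintype.card_sum, Fintype.card_fin, Fintype.card_unit] at harcs ⊢
  lia

theorem sparsityMatrix_mulVec (Δ : ℕ) (z : SparsityCol (Δ - 1) → ℤ) :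
    (sparsityMatrix Δ).mulVec z =
      Sum.elim (fun i => z (.inl i) + z (.inr (.inl i)))
        (Sum.elim (fun p => z (.inl p.1.1) - z (.inl p.1.2) + z (.inr (.inr (.inl p))))
          (fun _ => Δ * z (.inr (.inr (.inr ()))) - ∑ i, z (.inl i))) := by
  ext (i | p | _)
  · simp [Matrix.mulVec, dotProduct, sparsityMatrix]
  · simp [Matrix.mulVec, dotProduct, sparsityMatrix, sub_mul, Finset.sum_sub_distrib]
  · simp [Matrix.mulVec, dotProduct, sparsityMatrix, neg_add_eq_sub]

theorem sparsityMatrix_mulVec_eq_sparsityRhs_iff {Δ : ℕ} {z : SparsityCol (Δ - 1) → ℤ} :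
    (sparsityMatrix Δ).mulVec z = sparsityRhs Δ ↔
      (∀ i, z (.inl i) + z (.inr (.inl i)) = 2) ∧
      (∀ p : CompleteArc (Δ - 1),
        z (.inl p.1.1) - z (.inl p.1.2) + z (.inr (.inr (.inl p))) = 1) ∧
      Δ * z (.inr (.inr (.inr ()))) - ∑ i, z (.inl i) = 1 := by
  simp only [sparsityMatrix_mulVec, sparsityRhs, funext_iff, Sum.forall, Sum.elim_inl, Sum.elim_inr,
    forall_const]

/-- For `Δ ≥ 2`, with `m = (Δ−1)² + 1` and `n = (Δ−1)² + Δ`, the only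
`z ∈ ℤ^n` with `Az = b` and `z ≥ 0` (for the block matrix `A` and right-hand side `b`
above) is the all-ones vector. -/
theorem unique_nonneg_solution (Δ : ℕ) (hΔ : 2 ≤ Δ) :
    Fintype.card (SparsityRow (Δ - 1)) = (Δ - 1) ^ 2 + 1 ∧
    Fintype.card (SparsityCol (Δ - 1)) = (Δ - 1) ^ 2 + Δ ∧
    ∀ z : SparsityCol (Δ - 1) → ℤ,
      (sparsityMatrix Δ).mulVec z = sparsityRhs Δ → (∀ i, 0 ≤ z i) →
      z = fun _ => 1 := by
  refine ⟨card_sparsityRow _, by rw [card_sparsityCol]; lia, fun z hz hpos => ?_⟩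
  obtain ⟨hnode, harc, hlast⟩ := sparsityMatrix_mulVec_eq_sparsityRhs_iff.mp hz
  have hcard : (Fintype.card (Fin (Δ - 1)) : ℤ) + 1 = Δ := by
    rw [Fintype.card_fin]
    lia
  have hw : z (.inr (.inr (.inr ()))) = 1 :=
    eq_one_of_card_add_one_mul_sub_sum_eq_one (x := fun i => z (.inl i)) (fun i => hpos _)
      (fun i => by linarith [hnode i, hpos (.inr (.inl i))]) (by rwa [hcard])
  have hdiff : Pairwise fun i j => z (.inl i) - z (.inl j) ≤ 1 := fun i j hij => by
    linarith [harc ⟨(i, j), hij⟩, hpos (.inr (.inr (.inl ⟨(i, j), hij⟩)))]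
  have hx : ∀ i, z (.inl i) = 1 :=
    eq_of_pairwise_sub_le_one_of_sum_eq_card_mul hdiff (by rw [hw] at hlast; linarith)
  ext (i | i | p | _)
  · exact hx i
  · linarith [hnode i, hx i]
  · linarith [harc p, hx p.1.1, hx p.1.2]
  · exact hw
end

section
/- Let Δ ≥ 2 and let T' ∈ ℤ^{C(Δ,2)×Δ} be the arc-node incidence matrix of the directed graph on nodes {1, …, Δ} with arcs {(i,j) : i < j}, and let T be T' with its last column deleted. Let B ∈ ℤ^{(Δ−1)×(Δ−1)} be the matrix whose first Δ−2 rows are the first Δ−2 standard unit row vectors and whose last row is (Δ−1, …, Δ−1, Δ), and set A := T·B ∈ ℤ^{C(Δ,2)×(Δ−1)}. Then A has full column rank, A is Δ-modular, and ‖Az‖_∞ ≥ 2 for every nonzero z ∈ ℤ^{Δ−1}. -/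
/-- The arcs `{(i,j) : i < j}` of the directed graph on nodes `{1, …, Δ}`;
there are `C(Δ,2)` of them. -/
abbrev UpArc (Δ : ℕ) := {p : Fin Δ × Fin Δ // p.1 < p.2}

/-- `T`: the arc-node incidence matrix of the directed graph on `Δ` nodes with arcs
`{(i,j) : i < j}`, with its last column (the one of node `Δ`) deleted. Row of arc
`(i,j)` has a `+1` in column `i`, a `−1` in column `j` and zeros elsewhere. -/
def incidenceT (Δ : ℕ) : Matrix (UpArc Δ) (Fin (Δ - 1)) ℤ :=
  fun p j => (if (p.1.1 : ℕ) = (j : ℕ) then 1 else 0) -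
    (if (p.1.2 : ℕ) = (j : ℕ) then 1 else 0)

/-- `B`: the `(Δ−1)×(Δ−1)` matrix whose first `Δ−2` rows are the first `Δ−2` standard
unit row vectors and whose last row is `(Δ−1, …, Δ−1, Δ)`. -/
def lowerB (Δ : ℕ) : Matrix (Fin (Δ - 1)) (Fin (Δ - 1)) ℤ :=
  fun i j =>
    if (i : ℕ) < Δ - 2 then (if i = j then 1 else 0)
    else (if (j : ℕ) < Δ - 2 then (Δ : ℤ) - 1 else (Δ : ℤ))

/-!
`T` is totally unimodular and contains the identity (the arcs into node `Δ`), so every maximal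
minor of `A = T * B` is `0` or `± det B = ± Δ`, and `± Δ` occurs.

The columns of `B` all sum to `Δ`, so for `z ≠ 0` the vector `y = B z` is nonzero and `Δ` divides
`∑ i, y i`. If no `|y i|` reaches `2`, then `|∑ i, y i| ≤ Δ - 1`, which forces `∑ i, y i = 0`; hence
`y` has both a positive and a negative entry, and these differ by at least `2` along the arc joining
their nodes.
-/

open Matrix

section Determinant

variable {m n R : Type*} [Fintype n] [DecidableEq n] [CommRing R]

theorem det_eq_zero_of_row_sum_eq_zero {M : Matrix n n R} [Nonempty n]
    (hM : ∀ i, ∑ j, M i j = 0) : M.det = 0 := by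
  obtain ⟨i⟩ := ‹Nonempty n›
  refine det_eq_zero_of_mulVec_eq_zero_of_mem_nonZeroDivisors (v := 1) (i := i) ?_ (one_mem _)
  ext i
  simpa only [mulVec, dotProduct_one, Pi.zero_apply] using hM i

theorem det_mem_range_signType_of_row_eq_single {k : ℕ} {M : Matrix (Fin (k + 1)) (Fin (k + 1)) R}
    {i c : Fin (k + 1)} {σ : SignType} (hrow : M i = Pi.single c (σ : R))
    (hminor : (M.submatrix i.succAbove c.succAbove).det ∈ Set.range SignType.cast) :
    M.det ∈ Set.range SignType.cast := by
  have hdet : M.det = (-1) ^ (i + c : ℕ) * σ * (M.submatrix i.succAbove c.succAbove).det := by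
    rw [det_succ_row M i, Fintype.sum_eq_single c fun j hj => by simp [hrow, hj], hrow,
      Pi.single_eq_same]
  rw [hdet]
  change _ ∈ MonoidHom.mrange (SignType.castHom (α := R)).toMonoidHom
  exact mul_mem (mul_mem (pow_mem (MonoidHom.mem_mrange.mpr ⟨-1, by simp⟩) _) ⟨σ, rfl⟩) hminor

theorem injective_of_det_submatrix_ne_zero {A : Matrix m n R} {f : n → m}
    (hf : (A.submatrix f id).det ≠ 0) : Function.Injective f := by
  intro i j hij
  by_contra hne
  exact hf (det_zero_of_row_eq hne (by ext; simp [hij]))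

theorem rank_eq_card_of_det_submatrix_ne_zero [IsDomain R] {A : Matrix m n R} {f : n → m}
    (hf : (A.submatrix f id).det ≠ 0) : A.rank = Fintype.card n := by
  refine A.rank_le_card_width.antisymm ?_
  rw [← rank_of_det_ne_zero hf]
  exact rank_submatrix_le A f id

end Determinant

section ArcNodeIncidence

variable {E V R : Type*} [DecidableEq V] [CommRing R]

variable (R) in
/-- The arc-node incidence matrix of the directed multigraph whose arc `a` runs from `s a` to
`t a`. A loop contributes a zero row. -/
def arcNodeIncidence (s t : E → V) : Matrix E V R :=
  fun a => Pi.single (s a) 1 - Pi.single (t a) 1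

theorem arcNodeIncidence_comp_sum_eq_zero_or_eq_single {ι : Type*} [Fintype ι] [DecidableEq ι]
    (s t : E → V) (a : E) {g : ι → V} (hg : g.Injective) :
    ∑ j, arcNodeIncidence R s t a (g j) = 0 ∨
      ∃ c, ∃ σ : SignType, arcNodeIncidence R s t a ∘ g = Pi.single c (σ : R) := by
  have single_comp_apply (c : ι) (x : R) : (Pi.single (g c) x : V → R) ∘ g = Pi.single c x := by
    ext j
    simp [Pi.single_apply, hg.eq_iff]
  have single_comp_of_notMem {v : V} (hv : v ∉ Set.range g) : (Pi.single v 1 : V → R) ∘ g = 0 := by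
    ext j
    exact Pi.single_eq_of_ne (fun h => hv ⟨j, h⟩) 1
  have row_comp : arcNodeIncidence R s t a ∘ g =
      (Pi.single (s a) 1 : V → R) ∘ g - (Pi.single (t a) 1 : V → R) ∘ g := rfl
  change ∑ j, (arcNodeIncidence R s t a ∘ g) j = 0 ∨ _
  rw [row_comp]
  by_cases hs : s a ∈ Set.range g <;> by_cases ht : t a ∈ Set.range g
  · obtain ⟨c, hc⟩ := hs
    obtain ⟨d, hd⟩ := ht
    left
    simp [← hc, ← hd, single_comp_apply]
  · obtain ⟨c, hc⟩ := hs
    exact .inr ⟨c, 1, by simp [← hc, single_comp_apply, single_comp_of_notMem ht]⟩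
  · obtain ⟨d, hd⟩ := ht
    exact .inr ⟨d, -1, by simp [← hd, single_comp_apply, single_comp_of_notMem hs, Pi.single_neg]⟩
  · left
    simp [single_comp_of_notMem hs, single_comp_of_notMem ht]

theorem isTotallyUnimodular_arcNodeIncidence (s t : E → V) :
    (arcNodeIncidence R s t).IsTotallyUnimodular := by
  intro k f g hf hg
  induction k with
  | zero => exact ⟨1, by simp⟩
  | succ k ih =>
    -- Either the all-ones vector is in the kernel, or some chosen arc has exactly one end among the
    -- chosen nodes and the determinant is expanded along its row.
    by_cases hsum : ∀ i, ∑ j, arcNodeIncidence R s t (f i) (g j) = 0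
    · have hdet : ((arcNodeIncidence R s t).submatrix f g).det = 0 :=
        det_eq_zero_of_row_sum_eq_zero hsum
      exact ⟨0, by rw [hdet, SignType.coe_zero]⟩
    · obtain ⟨i, hi⟩ := not_forall.mp hsum
      obtain ⟨c, σ, hrow⟩ :=
        (arcNodeIncidence_comp_sum_eq_zero_or_eq_single s t (f i) hg).resolve_left hi
      exact det_mem_range_signType_of_row_eq_single hrow <|
        ih _ _ (hf.comp Fin.succAbove_right_injective) (hg.comp Fin.succAbove_right_injective)

end ArcNodeIncidence

section IsModular

variable {m n : Type*} [Fintype n] [DecidableEq n]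

/-- An integer matrix `A` is `Δ`-modular if it has full column rank and `Δ` is the largest absolute
value of a maximal minor. A choice of rows is encoded as an injection `f : n → m`; the order in
which `f` lists them only affects the sign of the minor. -/
structure IsModular (A : Matrix m n ℤ) (Δ : ℤ) : Prop where
  rank_eq_card : A.rank = Fintype.card n
  abs_det_le : ∀ f : n → m, f.Injective → |(A.submatrix f id).det| ≤ Δ
  exists_abs_det_eq : ∃ f : n → m, f.Injective ∧ |(A.submatrix f id).det| = Δ

theorem abs_det_submatrix_le_one_of_isTotallyUnimodular {T : Matrix m n ℤ}
    (hT : T.IsTotallyUnimodular) (f : n → m) : |(T.submatrix f id).det| ≤ 1 := by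
  obtain ⟨σ, hσ⟩ := (isTotallyUnimodular_iff_fintype T).mp hT n f id
  rw [← hσ]
  cases σ <;> simp

theorem isModular_mul_of_isTotallyUnimodular {T : Matrix m n ℤ} {B : Matrix n n ℤ} {f : n → m}
    (hT : T.IsTotallyUnimodular) (hf : (T.submatrix f id).det ≠ 0) (hB : B.det ≠ 0) :
    IsModular (T * B) |B.det| := by
  have det_mul_submatrix (e : n → m) :
      ((T * B).submatrix e id).det = (T.submatrix e id).det * B.det := by
    rw [submatrix_mul T B e id id Function.bijective_id, det_mul, submatrix_id_id]
  have hTB : ((T * B).submatrix f id).det ≠ 0 := det_mul_submatrix f ▸ mul_ne_zero hf hB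
  have abs_det_eq_one : |(T.submatrix f id).det| = 1 :=
    (abs_det_submatrix_le_one_of_isTotallyUnimodular hT f).antisymm (Int.one_le_abs hf)
  refine ⟨rank_eq_card_of_det_submatrix_ne_zero hTB, fun e _ => ?_,
    f, injective_of_det_submatrix_ne_zero hTB, ?_⟩
  · rw [det_mul_submatrix, abs_mul]
    exact mul_le_of_le_one_left (abs_nonneg _)
      (abs_det_submatrix_le_one_of_isTotallyUnimodular hT e)
  · rw [det_mul_submatrix, abs_mul, abs_det_eq_one, one_mul]

end IsModular

section IntegerVectors

variable {ι : Type*} [Fintype ι] {y : ι → ℤ}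

theorem exists_two_le_sub_of_sum_eq_zero (hy : y ≠ 0) (hsum : ∑ i, y i = 0) :
    ∃ i j, 2 ≤ y i - y j := by
  obtain ⟨k, hk⟩ := Function.ne_iff.mp hy
  obtain ⟨i, -, hi⟩ := Finset.exists_pos_of_sum_zero_of_exists_nonzero y hsum
    ⟨k, Finset.mem_univ k, hk⟩
  obtain ⟨j, -, hj⟩ := Finset.exists_pos_of_sum_zero_of_exists_nonzero (fun i => -y i)
    (by simpa using hsum) ⟨k, Finset.mem_univ k, neg_ne_zero.mpr hk⟩
  exact ⟨i, j, by omega⟩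

theorem exists_two_le_abs_or_two_le_sub_of_dvd_sum {d : ℤ} (hy : y ≠ 0)
    (hcard : Fintype.card ι < d) (hdvd : d ∣ ∑ i, y i) :
    (∃ i, 2 ≤ |y i|) ∨ ∃ i j, 2 ≤ y i - y j := by
  refine or_iff_not_imp_left.mpr fun hsmall => ?_
  have abs_le_one (i : ι) : |y i| ≤ 1 := Int.lt_add_one_iff.mp (not_le.mp fun h => hsmall ⟨i, h⟩)
  refine exists_two_le_sub_of_sum_eq_zero hy (Int.eq_zero_of_abs_lt_dvd hdvd ?_)
  calc |∑ i, y i| ≤ ∑ i, |y i| := Finset.abs_sum_le_sum_abs _ _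
    _ ≤ ∑ _i : ι, 1 := Finset.sum_le_sum fun i _ => abs_le_one i
    _ = Fintype.card ι := by simp
    _ < d := hcard

end IntegerVectors

section LowerB

variable {Δ : ℕ}

theorem det_lowerB (hΔ : 2 ≤ Δ) : (lowerB Δ).det = Δ := by
  obtain ⟨n, rfl⟩ := Nat.exists_eq_add_of_le' hΔ
  have hlower : (lowerB (n + 2)).IsLowerTriangular := by
    intro i j hij
    have hlt : (i : ℕ) < j := hij
    have hi : (i : ℕ) < n := by omega
    simp [lowerB, hi, Fin.ne_of_lt hlt]
  rw [det_of_isLowerTriangular _ hlower]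
  change ∏ i : Fin (n + 1), lowerB (n + 2) i i = _
  simp [Fin.prod_univ_castSucc, lowerB]

theorem det_lowerB_ne_zero (hΔ : 2 ≤ Δ) : (lowerB Δ).det ≠ 0 := by
  rw [det_lowerB hΔ]
  positivity

theorem one_vecMul_lowerB : 1 ᵥ* lowerB Δ = fun _ => (Δ : ℤ) := by
  ext j
  obtain ⟨n, rfl⟩ := Nat.exists_eq_add_of_le' (show 2 ≤ Δ by have := j.2; omega)
  change Fin (n + 1) at j
  rw [vecMul, one_dotProduct]
  change ∑ i : Fin (n + 1), lowerB (n + 2) i j = _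
  rw [Fin.sum_univ_castSucc]
  induction j using Fin.lastCases with
  | last => simp [lowerB, Fin.ext_iff, fun i : Fin n => i.2.ne]
  | cast j => simp [lowerB]

theorem sum_lowerB_mulVec (z : Fin (Δ - 1) → ℤ) : ∑ i, (lowerB Δ *ᵥ z) i = Δ * ∑ j, z j := by
  rw [← one_dotProduct, dotProduct_mulVec, one_vecMul_lowerB, dotProduct, Finset.mul_sum]

end LowerB

section IncidenceT

variable {Δ : ℕ}

theorem incidenceT_eq_submatrix_arcNodeIncidence (Δ : ℕ) :
    incidenceT Δ = (arcNodeIncidence ℤ (fun p : UpArc Δ => p.1.1) fun p => p.1.2).submatrix id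
      (Fin.castLE (Nat.sub_le Δ 1)) := by
  ext p j
  simp [incidenceT, arcNodeIncidence, Pi.single_apply, Fin.ext_iff, eq_comm]

theorem isTotallyUnimodular_incidenceT (Δ : ℕ) : (incidenceT Δ).IsTotallyUnimodular := by
  rw [incidenceT_eq_submatrix_arcNodeIncidence]
  exact (isTotallyUnimodular_arcNodeIncidence _ _).submatrix _ _

/-- The arc between two nodes whose columns are kept in `incidenceT Δ`. -/
def innerArc {i j : Fin (Δ - 1)} (hij : i < j) : UpArc Δ :=
  ⟨(i.castLE (Nat.sub_le Δ 1), j.castLE (Nat.sub_le Δ 1)), hij⟩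

/-- The arc from node `i` to the node whose column is deleted in `incidenceT Δ`. -/
def arcToLast (i : Fin (Δ - 1)) : UpArc Δ :=
  ⟨(i.castLE (Nat.sub_le Δ 1), ⟨Δ - 1, by have := i.2; omega⟩), i.2⟩

theorem submatrix_incidenceT_arcToLast : (incidenceT Δ).submatrix arcToLast id = 1 := by
  ext i j
  simp [incidenceT, arcToLast, one_apply, ← Fin.ext_iff, j.2.ne']

theorem incidenceT_mulVec_arcToLast (y : Fin (Δ - 1) → ℤ) (i : Fin (Δ - 1)) :
    (incidenceT Δ *ᵥ y) (arcToLast i) = y i := by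
  change ((incidenceT Δ).submatrix arcToLast id *ᵥ y) i = y i
  rw [submatrix_incidenceT_arcToLast, one_mulVec]

theorem incidenceT_mulVec_innerArc (y : Fin (Δ - 1) → ℤ) {i j : Fin (Δ - 1)} (hij : i < j) :
    (incidenceT Δ *ᵥ y) (innerArc hij) = y i - y j := by
  simp [mulVec, dotProduct, incidenceT, innerArc, sub_mul, ← Fin.ext_iff]

theorem exists_abs_incidenceT_mulVec_eq_abs_sub (y : Fin (Δ - 1) → ℤ) {i j : Fin (Δ - 1)}
    (hij : i ≠ j) : ∃ p, |(incidenceT Δ *ᵥ y) p| = |y i - y j| := by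
  rcases hij.lt_or_gt with h | h
  · exact ⟨innerArc h, by rw [incidenceT_mulVec_innerArc]⟩
  · exact ⟨innerArc h, by rw [incidenceT_mulVec_innerArc, abs_sub_comm]⟩

theorem exists_two_le_abs_incidenceT_mulVec {y : Fin (Δ - 1) → ℤ} (hy : y ≠ 0)
    (hdvd : (Δ : ℤ) ∣ ∑ i, y i) : ∃ p, 2 ≤ |(incidenceT Δ *ᵥ y) p| := by
  have hcard : (Fintype.card (Fin (Δ - 1)) : ℤ) < Δ := by
    obtain ⟨k, -⟩ := Function.ne_iff.mp hy
    have hk := k.2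
    rw [Fintype.card_fin]
    omega
  obtain ⟨i, hi⟩ | ⟨i, j, hij⟩ := exists_two_le_abs_or_two_le_sub_of_dvd_sum hy hcard hdvd
  · exact ⟨arcToLast i, by rwa [incidenceT_mulVec_arcToLast]⟩
  · have hne : i ≠ j := by
      rintro rfl
      omega
    obtain ⟨p, hp⟩ := exists_abs_incidenceT_mulVec_eq_abs_sub y hne
    exact ⟨p, hp ▸ hij.trans (le_abs_self _)⟩

end IncidenceT

theorem isModular_incidenceT_mul_lowerB {Δ : ℕ} (hΔ : 2 ≤ Δ) :
    IsModular (incidenceT Δ * lowerB Δ) Δ := by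
  have hmodular := isModular_mul_of_isTotallyUnimodular (f := arcToLast)
    (isTotallyUnimodular_incidenceT Δ) (by simp [submatrix_incidenceT_arcToLast])
    (det_lowerB_ne_zero hΔ)
  rwa [det_lowerB hΔ, Nat.abs_cast] at hmodular

theorem exists_two_le_abs_incidenceT_mul_lowerB_mulVec {Δ : ℕ} (hΔ : 2 ≤ Δ)
    {z : Fin (Δ - 1) → ℤ} (hz : z ≠ 0) : ∃ p, 2 ≤ |((incidenceT Δ * lowerB Δ) *ᵥ z) p| := by
  rw [← mulVec_mulVec]
  exact exists_two_le_abs_incidenceT_mulVec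
    (fun h => hz (eq_zero_of_mulVec_eq_zero (det_lowerB_ne_zero hΔ) h))
    (sum_lowerB_mulVec z ▸ dvd_mul_right _ _)

/-- For `Δ ≥ 2`, the matrix `A = T·B ∈ ℤ^{C(Δ,2)×(Δ−1)}` has full
column rank, is `Δ`-modular, and satisfies `‖Az‖_∞ ≥ 2` for every nonzero
`z ∈ ℤ^{Δ−1}`. -/
theorem lower_bound_construction (Δ : ℕ) (hΔ : 2 ≤ Δ) :
    (incidenceT Δ * lowerB Δ).rank = Δ - 1 ∧
    (∀ f : Fin (Δ - 1) → UpArc Δ, Function.Injective f →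
      |((incidenceT Δ * lowerB Δ).submatrix f id).det| ≤ (Δ : ℤ)) ∧
    (∃ f : Fin (Δ - 1) → UpArc Δ, Function.Injective f ∧
      |((incidenceT Δ * lowerB Δ).submatrix f id).det| = (Δ : ℤ)) ∧
    (∀ z : Fin (Δ - 1) → ℤ, z ≠ 0 → ∃ p, 2 ≤ |(incidenceT Δ * lowerB Δ).mulVec z p|) := by
  have hA := isModular_incidenceT_mul_lowerB hΔ
  exact ⟨by rw [hA.rank_eq_card, Fintype.card_fin], hA.abs_det_le, hA.exists_abs_det_eq,
    fun _ hz => exists_two_le_abs_incidenceT_mul_lowerB_mulVec hΔ hz⟩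
end
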